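/- For every (x,y) ∈ ℝ² with x ≥ 0 and (x,y) ≠ (0,0), PSF(x,y) = (1/(2π))·∫₀^{2π} f⁺(Φ − φ_{x,y})·χ⁺(β⁻¹·√(x²+y²)·cos Φ) dΦ, where φ_{x,y} = arccos(y/√(x²+y²)). (Proposition 3, Point Spread Function of the Imaging Algorithm.) -/

import Mathlib

open Real intervalIntegral

/-- **Proposition 3 (Point Spread Function of the Imaging Algorithm).**
With `PSF(x,y) = (1/(2π))·∫₀^{2π} f⁺(Φ)·χ⁺(D_f(x,y;Φ)) dΦ`, where
`D_f(x,y;Φ) = β⁻¹·(−x sin Φ + y cos Φ)`, for every `(x,y)` with `x ≥ 0` and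
`(x,y) ≠ (0,0)` one has
`PSF(x,y) = (1/(2π))·∫₀^{2π} f⁺(Φ − φ_{x,y})·χ⁺(β⁻¹·√(x²+y²)·cos Φ) dΦ`,
where `φ_{x,y} = arccos(y/√(x²+y²))`. -/
theorem psf_formula
    (β : ℝ) (hβ : 0 < β)
    (fplus χplus : ℝ → ℝ)
    (hf : Continuous fplus) (hfper : Function.Periodic fplus (2 * π))
    (hχ : Continuous χplus) (hχ0 : χplus 0 = 1)
    (PSF : ℝ → ℝ → ℝ)
    (hPSF : ∀ x y : ℝ,
      PSF x y = (1 / (2 * π)) *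
        ∫ Φ in (0 : ℝ)..(2 * π),
          fplus Φ * χplus (β⁻¹ * (-x * Real.sin Φ + y * Real.cos Φ)))
    (x y : ℝ) (hx : 0 ≤ x) (hxy : (x, y) ≠ (0, 0)) :
    PSF x y = (1 / (2 * π)) *
      ∫ Φ in (0 : ℝ)..(2 * π),
        fplus (Φ - Real.arccos (y / Real.sqrt (x ^ 2 + y ^ 2))) *
          χplus (β⁻¹ * Real.sqrt (x ^ 2 + y ^ 2) * Real.cos Φ) := by
  rw [hPSF]
  congr 1
  have hpos : 0 < x ^ 2 + y ^ 2 := by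
    rcases eq_or_ne x 0 with h | h
    · have hy : y ≠ 0 := by
        rintro rfl
        exact hxy (by rw [h])
      positivity
    · positivity
  set r := Real.sqrt (x ^ 2 + y ^ 2) with hr
  have hr0 : 0 < r := Real.sqrt_pos.mpr hpos
  have hr2 : r ^ 2 = x ^ 2 + y ^ 2 := Real.sq_sqrt hpos.le
  have habs : |y| ≤ r := Real.abs_le_sqrt (by nlinarith [sq_nonneg x])
  have hcos : Real.cos (Real.arccos (y / r)) = y / r := by
    apply Real.cos_arccos
    · rw [le_div_iff₀ hr0]
      linarith [(abs_le.mp habs).1]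
    · rw [div_le_one hr0]
      exact (abs_le.mp habs).2
  have hsin : Real.sin (Real.arccos (y / r)) = x / r := by
    rw [Real.sin_arccos]
    have h1 : 1 - (y / r) ^ 2 = (x / r) ^ 2 := by
      field_simp
      linarith
    rw [h1, Real.sqrt_sq (by positivity)]
  set φ := Real.arccos (y / r) with hφ
  have key : ∀ Φ : ℝ, -x * Real.sin Φ + y * Real.cos Φ = r * Real.cos (Φ + φ) := by
    intro Φ
    rw [Real.cos_add, hcos, hsin]
    field_simp
    ring
  have hper : Function.Periodic
      (fun Φ : ℝ => fplus Φ * χplus (β⁻¹ * (-x * Real.sin Φ + y * Real.cos Φ))) (2 * π) := by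
    intro Φ
    simp only [hfper Φ, Real.sin_add_two_pi, Real.cos_add_two_pi]
  have h2 : ∀ Φ : ℝ, fplus (Φ - φ) * χplus (β⁻¹ * r * Real.cos Φ) =
      (fun Φ : ℝ => fplus Φ * χplus (β⁻¹ * (-x * Real.sin Φ + y * Real.cos Φ))) (Φ - φ) := by
    intro Φ
    simp only [key, sub_add_cancel, mul_assoc]
  simp_rw [h2]
  rw [intervalIntegral.integral_comp_sub_right
    (fun Φ : ℝ => fplus Φ * χplus (β⁻¹ * (-x * Real.sin Φ + y * Real.cos Φ))) φ]
  have h3 := hper.intervalIntegral_add_eq 0 (0 - φ)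
  rw [zero_add] at h3
  rw [h3]
  congr 1
  ring
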